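/- Let G be a connected simple graph on a finite, linearly ordered vertex set V, with root r and level function L(v) = dist(r, v). Then the number of triangles of G (unordered triples of pairwise adjacent vertices) equals the cardinality of the set of ordered triples (u, v, w) of vertices such that u, v, w are pairwise adjacent in G, L(u) = L(v), u < v, and either L(w) ≠ L(u), or L(w) = L(u) and v < w. (This is the correctness of the cover-edge triangle counting algorithm CETC: each triangle is counted exactly once.) -/

import Mathlib

open Finset

/-!
The levels of adjacent vertices differ by at most one, so two vertices of every triangle lie on the
same level. Hence a triangle either has a single vertex off the common level of the other two, or
lies on one level and has a largest vertex. Call this vertex the apex. CETC counts `(u, v, w)`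
exactly when `{u, v, w}` is a triangle with apex `w` and `u < v`; as the apex is unique, each
triangle is counted once.
-/

section Apex

variable {V α : Type*} {L : V → α} {s : Finset V} {w w' : V}

/-- `w` is the apex of `s` for the level function `L`: the other vertices of `s` share one level,
and `w` exceeds each of them that is on its own level. Thus `w` is either off the common level of
the other vertices or the largest vertex of the one-level set `s`. -/
structure IsApex [LT V] (L : V → α) (s : Finset V) (w : V) : Prop where
  mem : w ∈ s
  level_eq : ∀ x ∈ s, x ≠ w → ∀ y ∈ s, y ≠ w → L x = L y
  lt_of_level_eq : ∀ x ∈ s, x ≠ w → L x = L w → x < w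

theorem IsApex.unique [Preorder V] (hs : 2 < #s) (hw : IsApex L s w) (hw' : IsApex L s w') :
    w = w' := by
  classical
  by_contra hne
  obtain ⟨x, hx, hxww'⟩ : ∃ x ∈ s, x ∉ ({w, w'} : Finset V) :=
    exists_mem_notMem_of_card_lt_card (card_le_two.trans_lt hs)
  obtain ⟨hxw, hxw'⟩ : x ≠ w ∧ x ≠ w' := by simpa using hxww'
  have level_eq : L w = L w' :=
    (hw'.level_eq w hw.mem hne x hx hxw').trans (hw.level_eq x hx hxw w' hw'.mem (Ne.symm hne))
  exact lt_asymm (hw'.lt_of_level_eq w hw.mem hne level_eq)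
    (hw.lt_of_level_eq w' hw'.mem (Ne.symm hne) level_eq.symm)

theorem exists_isApex_of_not_injOn [LinearOrder V] (hs : #s = 3) (hL : ¬ Set.InjOn L s) :
    ∃ w, IsApex L s w := by
  obtain ⟨a, ha, b, hb, hLab, hab⟩ : ∃ a ∈ s, ∃ b ∈ s, L a = L b ∧ a ≠ b := by
    simpa [Set.InjOn] using hL
  by_cases hconst : ∀ x ∈ s, L x = L a
  · have hne : s.Nonempty := ⟨a, ha⟩
    exact ⟨s.max' hne, s.max'_mem hne,
      fun x hx _ y hy _ ↦ (hconst x hx).trans (hconst y hy).symm,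
      fun x hx hxmax _ ↦ (s.le_max' x hx).lt_of_ne hxmax⟩
  · push Not at hconst
    obtain ⟨c, hc, hLca⟩ := hconst
    have hs_eq : {a, b, c} = s :=
      eq_of_subset_of_card_le (by grind) (by grind)
    have level_eq : ∀ x ∈ s, x ≠ c → L x = L a := by grind
    exact ⟨c, hc, fun x hx hxc y hy hyc ↦ (level_eq x hx hxc).trans (level_eq y hy hyc).symm,
      fun x hx hxc hLxc ↦ absurd (hLxc.symm.trans (level_eq x hx hxc)) hLca⟩

end Apex

theorem exists_lt_of_card_eq_two {V : Type*} [LinearOrder V] {s : Finset V} (hs : #s = 2) :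
    ∃ u v, u < v ∧ s = {u, v} := by
  obtain ⟨u, v, huv, rfl⟩ := card_eq_two.mp hs
  obtain huv | hvu := huv.lt_or_gt
  · exact ⟨u, v, huv, rfl⟩
  · exact ⟨v, u, hvu, pair_comm u v⟩

theorem pair_eq_pair_iff_of_lt {V : Type*} [LinearOrder V] {u v u' v' : V}
    (h : u < v) (h' : u' < v') : ({u, v} : Finset V) = {u', v'} ↔ u = u' ∧ v = v' := by
  rw [← coe_inj, coe_pair, coe_pair, Set.pair_eq_pair_iff]
  grind

theorem erase_triple_eq_pair {V : Type*} [DecidableEq V] {u v w : V} (huw : u ≠ w)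
    (hvw : v ≠ w) : ({u, v, w} : Finset V).erase w = {u, v} := by
  grind

section CoverTriples

variable {V α : Type*} [LinearOrder V] {G : SimpleGraph V} {L : V → α}

/-- The triples `(u, v, w)` that CETC counts when it is run with an arbitrary level function `L`:
`{u, v}` is a horizontal edge with `u < v`, and `w` completes it to a triangle. -/
def cetcTriples (G : SimpleGraph V) (L : V → α) : Set (V × V × V) :=
  {t | G.Adj t.1 t.2.1 ∧ G.Adj t.1 t.2.2 ∧ G.Adj t.2.1 t.2.2 ∧
    L t.1 = L t.2.1 ∧ t.1 < t.2.1 ∧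
    (L t.2.2 ≠ L t.1 ∨ (L t.2.2 = L t.1 ∧ t.2.1 < t.2.2))}

theorem mem_cetcTriples_iff_isApex {u v w : V} :
    (u, v, w) ∈ cetcTriples G L ↔
      G.IsNClique 3 {u, v, w} ∧ u < v ∧ IsApex L {u, v, w} w := by
  rw [SimpleGraph.is3Clique_triple_iff]
  constructor
  · rintro ⟨huv, huw, hvw, hL, hlt, hw⟩
    exact ⟨⟨huv, huw, hvw⟩, hlt, by simp, by grind, by grind⟩
  · rintro ⟨⟨huv, huw, hvw⟩, hlt, hw⟩
    have hL : L u = L v := hw.level_eq u (by simp) huw.ne v (by simp) hvw.ne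
    have hvw_lt : L v = L w → v < w := hw.lt_of_level_eq v (by simp) hvw.ne
    exact ⟨huv, huw, hvw, hL, hlt, by grind⟩

theorem injOn_cetcTriples :
    Set.InjOn (fun t : V × V × V ↦ ({t.1, t.2.1, t.2.2} : Finset V)) (cetcTriples G L) := by
  rintro ⟨u, v, w⟩ ht ⟨u', v', w'⟩ ht' (heq : ({u, v, w} : Finset V) = {u', v', w'})
  obtain ⟨hclique, huv, hw⟩ := mem_cetcTriples_iff_isApex.mp ht
  obtain ⟨hclique', huv', hw'⟩ := mem_cetcTriples_iff_isApex.mp ht'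
  obtain rfl : w = w' := hw.unique (by simp [hclique.card_eq]) (heq ▸ hw')
  obtain ⟨-, huw, hvw⟩ := SimpleGraph.is3Clique_triple_iff.mp hclique
  obtain ⟨-, huw', hvw'⟩ := SimpleGraph.is3Clique_triple_iff.mp hclique'
  have hpair : ({u, v} : Finset V) = {u', v'} := by
    rw [← erase_triple_eq_pair huw.ne hvw.ne, heq, erase_triple_eq_pair huw'.ne hvw'.ne]
  obtain ⟨rfl, rfl⟩ := (pair_eq_pair_iff_of_lt huv huv').mp hpair
  rfl

theorem surjOn_cetcTriples (hL : ∀ s ∈ G.cliqueSet 3, ¬ Set.InjOn L s) :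
    Set.SurjOn (fun t : V × V × V ↦ ({t.1, t.2.1, t.2.2} : Finset V))
      (cetcTriples G L) (G.cliqueSet 3) := by
  intro s hs
  obtain ⟨w, hw⟩ := exists_isApex_of_not_injOn hs.card_eq (hL s hs)
  obtain ⟨u, v, huv, herase⟩ : ∃ u v, u < v ∧ s.erase w = {u, v} :=
    exists_lt_of_card_eq_two (by rw [card_erase_of_mem hw.mem, hs.card_eq])
  obtain rfl : {u, v, w} = s := by
    rw [← insert_erase hw.mem, herase]
    grind
  exact ⟨(u, v, w), mem_cetcTriples_iff_isApex.mpr ⟨hs, huv, hw⟩, rfl⟩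

theorem cetc_correctness_general (hL : ∀ s ∈ G.cliqueSet 3, ¬ Set.InjOn L s) :
    Set.BijOn (fun t : V × V × V ↦ ({t.1, t.2.1, t.2.2} : Finset V))
      (cetcTriples G L) (G.cliqueSet 3) :=
  ⟨fun _ ht ↦ (mem_cetcTriples_iff_isApex.mp ht).1, injOn_cetcTriples, surjOn_cetcTriples hL⟩

end CoverTriples

theorem not_injOn_dist_of_isNClique {V : Type*} {G : SimpleGraph V} {n : ℕ} {s : Finset V}
    (hs : G.IsNClique n s) (hn : 2 < n) (r : V) : ¬ Set.InjOn (G.dist r) s := by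
  intro hinj
  obtain ⟨a, ha, b, hb, c, hc, hab, hac, hbc⟩ := two_lt_card.mp (hs.card_eq ▸ hn)
  have dist_ab := (hs.isClique ha hb hab).diff_dist_adj (u := r)
  have dist_ac := (hs.isClique ha hc hac).diff_dist_adj (u := r)
  have dist_bc := (hs.isClique hb hc hbc).diff_dist_adj (u := r)
  have dist_ab_ne := hinj.ne ha hb hab
  have dist_ac_ne := hinj.ne ha hc hac
  have dist_bc_ne := hinj.ne hb hc hbc
  lia

/-- correctness of the CETC algorithm: In a connected simple
graph on a finite linearly ordered vertex set, with root `r` and level function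
`L v = dist r v`, the number of triangles equals the number of ordered triples
`(u, v, w)` of pairwise adjacent vertices with `L u = L v`, `u < v`, and
either `L w ≠ L u`, or `L w = L u` and `v < w`. -/
theorem cetc_correctness {V : Type*} [Fintype V] [LinearOrder V]
    (G : SimpleGraph V) [DecidableRel G.Adj] (hG : G.Connected) (r : V) :
    (G.cliqueFinset 3).card =
      (Finset.univ.filter (fun t : V × V × V =>
        G.Adj t.1 t.2.1 ∧ G.Adj t.1 t.2.2 ∧ G.Adj t.2.1 t.2.2 ∧
        G.dist r t.1 = G.dist r t.2.1 ∧ t.1 < t.2.1 ∧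
        (G.dist r t.2.2 ≠ G.dist r t.1 ∨
          (G.dist r t.2.2 = G.dist r t.1 ∧ t.2.1 < t.2.2)))).card := by
  have hbij := cetc_correctness_general fun s (hs : s ∈ G.cliqueSet 3) ↦
    not_injOn_dist_of_isNClique hs (by decide) r
  rw [cetcTriples, ← coe_filter_univ, ← SimpleGraph.coe_cliqueFinset] at hbij
  exact (hbij.finsetCard_eq _).symm
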